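/- Let k ≥ 1 and let K = M·(1+2+⋯+k) + 1 = M·k(k+1)/2 + 1 for some M ∈ ℕ. Then the stabiliser in SL(k,ℂ) of the point p_k ⊗ e_1^{⊗K} ∈ ∧^k(Sym^{≤k}ℂ^k) ⊗ (ℂ^k)^{⊗K} is exactly 𝕌_k. -/

import Mathlib

open scoped BigOperators

namespace JetPaper

/-- Monomials in `n` variables of degree between `1` and `k`:
these index the standard basis of `Sym^{≤k}ℂ^n = ⊕_{l=1}^k Sym^l ℂ^n`. -/
def Mon (n k : ℕ) : Type := {m : Fin n → ℕ // 0 < ∑ i, m i ∧ ∑ i, m i ≤ k}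

noncomputable instance (n k : ℕ) : Fintype (Mon n k) :=
  Fintype.ofInjective
    (fun m : Mon n k => (fun i => (⟨m.1 i, Nat.lt_succ_of_le
        ((Finset.single_le_sum (fun _ _ => Nat.zero_le _) (Finset.mem_univ i)).trans
          m.2.2)⟩ : Fin (k + 1))))
    (fun _ _ h => Subtype.ext (funext fun i => congrArg Fin.val (congrFun h i)))

/-- The matrix coefficient of the `GL(n)`-action on `Sym^{≤k}ℂ^n` induced by the standard
action on `ℂ^n` (`g·e_i = ∑_j g_{ji} e_j`), in the monomial basis:
`symMat g m m'` is the coefficient of the monomial `m` in the image of the monomial `m'`. -/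
noncomputable def symMat {n k : ℕ} (g : Matrix (Fin n) (Fin n) ℂ) (m m' : Mon n k) : ℂ :=
  MvPolynomial.coeff (Finsupp.equivFunOnFinite.symm m.1)
    (∏ i : Fin n, (∑ j : Fin n, g j i • MvPolynomial.X j) ^ (m'.1 i))

/-- The induced action of `g ∈ GL(n)` on `(Sym^{≤k}ℂ^n)^{⊗k}`, in coordinates.
Elements of the `k`-th tensor power of `Sym^{≤k}ℂ^n` are recorded by their coordinates
in the basis indexed by `k`-tuples of monomials; `⋀^k(Sym^{≤k}ℂ^n)` is realised inside the
tensor power as the space of antisymmetric tensors. -/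
noncomputable def actV {n k : ℕ} (g : Matrix (Fin n) (Fin n) ℂ)
    (T : (Fin k → Mon n k) → ℂ) : (Fin k → Mon n k) → ℂ :=
  fun mf => ∑ mf' : Fin k → Mon n k, (∏ i, symMat g (mf i) (mf' i)) * T mf'

/-- The wedge product `v₁ ∧ ⋯ ∧ v_k` of `k` elements of `Sym^{≤k}ℂ^n`, realised as an
antisymmetric tensor in `(Sym^{≤k}ℂ^n)^{⊗k}` (in coordinates). -/
noncomputable def wedge {n k : ℕ} (v : Fin k → (Mon n k → ℂ)) : (Fin k → Mon n k) → ℂ :=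
  fun mf => ∑ σ : Equiv.Perm (Fin k), ((Equiv.Perm.sign σ : ℤ) : ℂ) * ∏ i, v (σ i) (mf i)

/-- The `j`-th coordinate polynomial of `φ(γ) ∈ Hom(ℂ^k, Sym^{≤k}ℂ^n)` for
`γ ∈ Hom(ℂ^k, ℂ^n)`: the sum over all `s ≥ 1` and all ordered `s`-tuples `(i₁,…,i_s)` of
positive integers with `i₁+⋯+i_s = j` of the product (in the symmetric algebra,
realised as the polynomial ring in `n` variables) of the `i₁`-th, …, `i_s`-th columns
of `γ`.  A tuple of length `s = l+1` is recorded as a function `a : Fin (l+1) → Fin k`,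
the value `a t` standing for the positive integer `(a t) + 1`. -/
noncomputable def colPoly {n k : ℕ} (γ : Matrix (Fin n) (Fin k) ℂ) (j : Fin k) :
    MvPolynomial (Fin n) ℂ :=
  ∑ l : Fin k, ∑ a : Fin (l.val + 1) → Fin k,
    if (∑ t, ((a t).val + 1)) = j.val + 1 then
      ∏ t, (∑ i : Fin n, γ i (a t) • MvPolynomial.X i)
    else 0

/-- The map `φ : Hom(ℂ^k,ℂ^n) → Hom(ℂ^k, Sym^{≤k}ℂ^n)` as a matrix in the monomial basis:
rows are indexed by monomials, columns by `Fin k`. -/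
noncomputable def phiMat {n k : ℕ} (γ : Matrix (Fin n) (Fin k) ℂ) :
    Matrix (Mon n k) (Fin k) ℂ :=
  fun m j => MvPolynomial.coeff (Finsupp.equivFunOnFinite.symm m.1) (colPoly γ j)

/-- `φ^{Proj}` at the level of vectors: the wedge `φ(γ)e₁ ∧ ⋯ ∧ φ(γ)e_k` of the columns of
`φ(γ)`, an element of `⋀^k(Sym^{≤k}ℂ^n)` in coordinates. -/
noncomputable def wedgePhi {n k : ℕ} (γ : Matrix (Fin n) (Fin k) ℂ) :
    (Fin k → Mon n k) → ℂ :=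
  wedge (fun j m => phiMat γ m j)

/-- The matrix of the reparametrization jet with parameters `α = (α₁,…,α_k)`
(`α_s` is recorded as `α ⟨s-1⟩`): the `(i,j)` entry is
`∑_{s₁+⋯+s_i = j, s_l ≥ 1} α_{s₁}⋯α_{s_i}` (rows and columns of `Fin k` represent
the integers `1,…,k`). -/
noncomputable def repMat (k : ℕ) (α : Fin k → ℂ) : Matrix (Fin k) (Fin k) ℂ :=
  fun i j => ∑ a : Fin (i.val + 1) → Fin k,
    if (∑ t, ((a t).val + 1)) = j.val + 1 then ∏ t, α (a t) else 0

/-- The reparametrization group `𝔾_k ⊂ GL(k,ℂ)`. -/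
def Gset (k : ℕ) : Set (Matrix (Fin k) (Fin k) ℂ) :=
  {g | ∃ α : Fin k → ℂ, (∀ i : Fin k, i.val = 0 → α i ≠ 0) ∧ g = repMat k α}

/-- The unipotent radical `𝕌_k ⊂ 𝔾_k`: the matrices `repMat k α` with `α₁ = 1`. -/
def Uset (k : ℕ) : Set (Matrix (Fin k) (Fin k) ℂ) :=
  {g | ∃ α : Fin k → ℂ, (∀ i : Fin k, i.val = 0 → α i = 1) ∧ g = repMat k α}

/-- The distinguished point
`p_k = e₁ ∧ (e₂ + e₁²) ∧ ⋯ ∧ (∑_{i₁+⋯+i_s = k} e_{i₁}⋯e_{i_s}) ∈ ⋀^k(Sym^{≤k}ℂ^k)`,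
i.e. the wedge of the columns of `φ(1)`. -/
noncomputable def pkVec (k : ℕ) : (Fin k → Mon k k) → ℂ :=
  wedgePhi (1 : Matrix (Fin k) (Fin k) ℂ)


/-- The representation space `W_{k,K} = ⋀^k(Sym^{≤k}ℂ^k) ⊗ (ℂ^k)^{⊗K}`, in coordinates:
the exterior power is realised inside `(Sym^{≤k}ℂ^k)^{⊗k}`. -/
abbrev Wspace (k K : ℕ) : Type := ((Fin k → Mon k k) × (Fin K → Fin k)) → ℂ

/-- The basis vector `e₁ ∈ ℂ^k` (indicator of the first coordinate). -/
def e1 (k : ℕ) : Fin k → ℂ := fun i => if (i : ℕ) = 0 then 1 else 0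

/-- The point `p_k ⊗ e₁^{⊗K} ∈ ⋀^k(Sym^{≤k}ℂ^k) ⊗ (ℂ^k)^{⊗K}`. -/
noncomputable def ptW (k K : ℕ) : Wspace k K :=
  fun x => pkVec k x.1 * ∏ j, e1 k (x.2 j)

/-- The natural action of `g ∈ GL(k,ℂ)` on `⋀^k(Sym^{≤k}ℂ^k) ⊗ (ℂ^k)^{⊗K}` (extension of
the standard action on `ℂ^k`), in coordinates. -/
noncomputable def actW {k K : ℕ} (g : Matrix (Fin k) (Fin k) ℂ) (T : Wspace k K) :
    Wspace k K :=
  fun x => ∑ y : (Fin k → Mon k k) × (Fin K → Fin k),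
    (∏ i, symMat g (x.1 i) (y.1 i)) * (∏ j, g (x.2 j) (y.2 j)) * T y

/-!
Write `x(t) = e₁ t + ⋯ + e_k t^k`, `q(t) = α₁ t + ⋯ + α_k t^k` and `F(t) = t + ⋯ + t^k`. The
entries of `repMat k α` are the coefficients of the powers of `q`, and the columns of `φ(1)` are the
coefficients of `F ∘ x`. Associativity of composition, `F ∘ (x ∘ q) = (F ∘ x) ∘ q` modulo
`t^(k+1)`, therefore says that `φ(repMat k α) = φ(1) * repMat k α`.

Conversely, suppose that `g` fixes the line through `p_k`. The maximal minors of `φ(g)` having at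
least `k - 1` rows at linear monomials determine `φ(g) * adj g` by Cramer's rule, so
`φ(g) = φ(1) * g`. Comparing the rows at the powers of `e₁` shows that `g = repMat k (g 0)`.
Finally `det (repMat k α) = α₁^(1+⋯+k)`, and the tensor factor `e₁^{⊗K}` pins down `α₁`.
-/

section Composition

open Polynomial

variable {A B R : Type*} [CommSemiring A] [CommSemiring B] [CommRing R] {k : ℕ}

theorem coeff_pow_eq_zero_of_X_dvd {q : A[X]} (hq : X ∣ q) {m n : ℕ} (h : m < n) :
    (q ^ n).coeff m = 0 :=
  X_pow_dvd_iff.1 (pow_dvd_pow_of_dvd hq n) m h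

theorem coeff_pow_self_of_X_dvd {q : A[X]} (hq : X ∣ q) (n : ℕ) :
    (q ^ n).coeff n = q.coeff 1 ^ n := by
  obtain ⟨r, rfl⟩ := hq
  have hr : ((X * r) ^ n).coeff n = (r ^ n).coeff 0 := by
    simpa only [mul_pow, zero_add] using coeff_X_pow_mul (r ^ n) n 0
  rw [hr, coeff_X_mul, coeff_zero_eq_eval_zero, eval_pow, ← coeff_zero_eq_eval_zero]

theorem coeff_succ_comp_of_X_dvd {q : A[X]} (hq : X ∣ q) (P : A[X]) (j : Fin k) :
    (P.comp q).coeff (j + 1) =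
      ∑ i : Fin k, (q ^ (i.val + 1)).coeff (j + 1) * P.coeff (i + 1) := by
  have hexpand : (P.comp q).coeff (j + 1) =
      ∑ i ∈ Finset.range (P.natDegree + k + 1), P.coeff i * (q ^ i).coeff (j + 1) := by
    simp only [comp, eval₂_eq_sum_range' C (show P.natDegree < P.natDegree + k + 1 by omega),
      finsetSum_coeff, coeff_C_mul]
  have htruncate : ∑ i ∈ Finset.range (k + 1), P.coeff i * (q ^ i).coeff (j + 1) =
      ∑ i ∈ Finset.range (P.natDegree + k + 1), P.coeff i * (q ^ i).coeff (j + 1) := by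
    refine Finset.sum_subset (Finset.range_mono (by omega)) fun i _ hi => ?_
    have hji : (j : ℕ) + 1 < i := by
      have := Finset.mem_range.not.1 hi
      omega
    rw [coeff_pow_eq_zero_of_X_dvd hq hji, mul_zero]
  rw [hexpand, ← htruncate, Finset.sum_range_succ', pow_zero, coeff_one, if_neg (by omega),
    mul_zero, add_zero, Finset.sum_range]
  simp only [mul_comm]

theorem sub_dvd_comp_sub (P p q : R[X]) : p - q ∣ P.comp p - P.comp q := by
  simpa only [eval_map, comp] using sub_dvd_eval_sub p q (P.map C)

/-- The polynomial `β₁ t + ⋯ + β_k t^k`, i.e. the `k`-jet at `0` of a curve through the origin;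
the coefficient `β_s` is recorded as `β ⟨s-1⟩`. -/
noncomputable def jetPoly (β : Fin k → A) : A[X] :=
  ∑ s : Fin k, C (β s) * X ^ (s.val + 1)

theorem coeff_succ_jetPoly (β : Fin k → A) (j : Fin k) : (jetPoly β).coeff (j + 1) = β j := by
  simp [jetPoly, coeff_X_pow, Fin.val_inj]

theorem coeff_one_jetPoly [NeZero k] (β : Fin k → A) : (jetPoly β).coeff 1 = β 0 := by
  simpa only [Fin.val_zero, zero_add] using coeff_succ_jetPoly β 0

theorem X_dvd_jetPoly (β : Fin k → A) : X ∣ jetPoly β :=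
  Finset.dvd_sum fun _ _ => dvd_mul_of_dvd_right (dvd_pow_self _ (Nat.succ_ne_zero _)) _

theorem coeff_jetPoly_pow (β : Fin k → A) (n N : ℕ) :
    (jetPoly β ^ n).coeff N =
      ∑ a : Fin n → Fin k, if ∑ t, ((a t).val + 1) = N then ∏ t, β (a t) else 0 := by
  simp only [jetPoly, Fintype.sum_pow, finsetSum_coeff, Finset.prod_mul_distrib,
    Finset.prod_pow_eq_pow_sum, ← map_prod, coeff_C_mul_X_pow, eq_comm]

theorem map_jetPoly (f : A →+* B) (β : Fin k → A) :
    (jetPoly β).map f = jetPoly fun s => f (β s) := by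
  simp [jetPoly, Polynomial.map_sum]

theorem map_coeff_jetPoly_pow (f : A →+* B) (β : Fin k → A) (n N : ℕ) :
    f ((jetPoly β ^ n).coeff N) = (jetPoly (fun s => f (β s)) ^ n).coeff N := by
  rw [← map_jetPoly, ← Polynomial.map_pow, coeff_map]

theorem jetPoly_mul_const (β : Fin k → A) (c : A) :
    jetPoly (fun s => β s * c) = jetPoly β * C c := by
  simp only [jetPoly, Finset.sum_mul, C_mul, mul_right_comm]

theorem jetPoly_comp (β : Fin k → A) (q : A[X]) :
    (jetPoly β).comp q = ∑ i : Fin k, C (β i) * q ^ (i.val + 1) := by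
  simp [jetPoly]

theorem X_pow_dvd_jetPoly_sub_comp {q : R[X]} (hq : X ∣ q) (β : Fin k → R) :
    X ^ (k + 1) ∣ jetPoly (fun j : Fin k => ∑ i : Fin k, (q ^ (i.val + 1)).coeff (j + 1) * β i) -
      (jetPoly β).comp q := by
  rw [X_pow_dvd_iff]
  rintro (_ | d) hd
  · have hconst (γ : Fin k → R) : (jetPoly γ).coeff 0 = 0 := X_dvd_iff.1 (X_dvd_jetPoly γ)
    simp [hconst, jetPoly_comp, coeff_pow_eq_zero_of_X_dvd hq]
  · obtain ⟨j, rfl⟩ : ∃ j : Fin k, d = j := ⟨⟨d, by omega⟩, rfl⟩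
    rw [coeff_sub, coeff_succ_jetPoly, coeff_succ_comp_of_X_dvd hq, sub_eq_zero]
    simp only [coeff_succ_jetPoly]

theorem isHomogeneous_coeff_jetPoly_pow {σ : Type*} {d : ℕ}
    {β : Fin k → MvPolynomial σ A} (hβ : ∀ s, (β s).IsHomogeneous d) (n N : ℕ) :
    ((jetPoly β ^ n).coeff N).IsHomogeneous (n * d) := by
  rw [coeff_jetPoly_pow]
  refine MvPolynomial.IsHomogeneous.sum _ _ _ fun a _ => ?_
  split_ifs
  · simpa using MvPolynomial.IsHomogeneous.prod Finset.univ (fun t => β (a t)) (fun _ => d)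
      fun t _ => hβ (a t)
  · exact MvPolynomial.isHomogeneous_zero _ _ _

end Composition

section ReparametrizationMatrix

variable {k : ℕ}

theorem repMat_apply (α : Fin k → ℂ) (i j : Fin k) :
    repMat k α i j = (jetPoly α ^ (i.val + 1)).coeff (j + 1) :=
  (coeff_jetPoly_pow α _ _).symm

theorem isUpperTriangular_repMat (α : Fin k → ℂ) : (repMat k α).IsUpperTriangular := by
  intro i j (hij : j < i)
  rw [repMat_apply]
  exact coeff_pow_eq_zero_of_X_dvd (X_dvd_jetPoly α) (Nat.succ_lt_succ hij)

variable [NeZero k]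

theorem repMat_zero_apply (α : Fin k → ℂ) (j : Fin k) : repMat k α 0 j = α j := by
  rw [repMat_apply, Fin.val_zero, zero_add, pow_one, coeff_succ_jetPoly]

theorem repMat_apply_self (α : Fin k → ℂ) (i : Fin k) :
    repMat k α i i = α 0 ^ (i.val + 1) := by
  rw [repMat_apply, coeff_pow_self_of_X_dvd (X_dvd_jetPoly α), coeff_one_jetPoly]

theorem det_repMat (α : Fin k → ℂ) :
    (repMat k α).det = α 0 ^ ∑ i ∈ Finset.range k, (i + 1) := by
  rw [Matrix.det_of_isUpperTriangular (isUpperTriangular_repMat α)]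
  simp only [repMat_apply_self, Finset.prod_pow_eq_pow_sum, Finset.sum_range]

theorem repMat_one_zero : repMat k ((1 : Matrix (Fin k) (Fin k) ℂ) 0) = 1 := by
  have hX : jetPoly ((1 : Matrix (Fin k) (Fin k) ℂ) 0) = Polynomial.X := by
    simp [jetPoly, Matrix.one_eq_pi_single, Pi.single_apply, apply_ite Polynomial.C, ite_mul]
  ext i j
  rw [repMat_apply, hX, Polynomial.coeff_X_pow, Matrix.one_apply]
  exact if_congr (by omega) rfl rfl

theorem e1_eq_single : e1 k = Pi.single 0 1 := by
  ext i
  simp [e1, Pi.single_apply]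

theorem repMat_mulVec_e1 (α : Fin k → ℂ) : (repMat k α).mulVec (e1 k) = α 0 • e1 k := by
  ext i
  rw [e1_eq_single, Matrix.mulVec_single_one, Matrix.col_apply]
  rcases eq_or_ne i 0 with rfl | hi
  · simp [repMat_zero_apply]
  · simp [isUpperTriangular_repMat α (Fin.pos_iff_ne_zero.2 hi), hi]

theorem mem_Uset_iff {g : Matrix (Fin k) (Fin k) ℂ} :
    g ∈ Uset k ↔ ∃ α : Fin k → ℂ, α 0 = 1 ∧ g = repMat k α := by
  simp only [Uset, Set.mem_ofPred_eq, Fin.val_eq_zero_iff, forall_eq]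

end ReparametrizationMatrix

section JetMap

variable {n k : ℕ}

/-- The linear form in `Sym^1 ℂ^n` given by the `s`-th column of `γ`. -/
noncomputable def columnForm (γ : Matrix (Fin n) (Fin k) ℂ) (s : Fin k) :
    MvPolynomial (Fin n) ℂ :=
  ∑ i : Fin n, γ i s • MvPolynomial.X i

theorem isHomogeneous_columnForm (γ : Matrix (Fin n) (Fin k) ℂ) (s : Fin k) :
    (columnForm γ s).IsHomogeneous 1 :=
  MvPolynomial.IsHomogeneous.sum _ _ _ fun i _ => by
    rw [MvPolynomial.smul_eq_C_mul]
    exact (MvPolynomial.isHomogeneous_X ℂ i).C_mul _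

theorem columnForm_mul (γ : Matrix (Fin n) (Fin k) ℂ) {l : ℕ} (g : Matrix (Fin k) (Fin l) ℂ)
    (j : Fin l) :
    columnForm (γ * g) j = ∑ i, MvPolynomial.C (g i j) * columnForm γ i := by
  simp only [columnForm, Matrix.mul_apply, MvPolynomial.smul_eq_C_mul, map_sum, map_mul,
    Finset.mul_sum, Finset.sum_mul]
  rw [Finset.sum_comm]
  exact Finset.sum_congr rfl fun _ _ => Finset.sum_congr rfl fun _ _ => by ring

theorem aeval_columnForm (g : Matrix (Fin n) (Fin n) ℂ) (γ : Matrix (Fin n) (Fin k) ℂ)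
    (s : Fin k) : MvPolynomial.aeval (columnForm g) (columnForm γ s) = columnForm (g * γ) s := by
  rw [columnForm_mul, columnForm, map_sum]
  refine Finset.sum_congr rfl fun i _ => ?_
  rw [map_smul, MvPolynomial.aeval_X, MvPolynomial.smul_eq_C_mul]

theorem colPoly_eq_sum_coeff (γ : Matrix (Fin n) (Fin k) ℂ) (j : Fin k) :
    colPoly γ j = ∑ l : Fin k, (jetPoly (columnForm γ) ^ (l.val + 1)).coeff (j + 1) := by
  simp only [coeff_jetPoly_pow]
  rfl

theorem colPoly_eq_coeff_comp (γ : Matrix (Fin n) (Fin k) ℂ) (j : Fin k) :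
    colPoly γ j = ((jetPoly (1 : Fin k → MvPolynomial (Fin n) ℂ)).comp
      (jetPoly (columnForm γ))).coeff (j + 1) := by
  simp [colPoly_eq_sum_coeff, jetPoly_comp]

theorem colPoly_mul_repMat (γ : Matrix (Fin n) (Fin k) ℂ) (α : Fin k → ℂ) (j : Fin k) :
    colPoly (γ * repMat k α) j = ∑ i, MvPolynomial.C (repMat k α i j) * colPoly γ i := by
  set F := jetPoly (1 : Fin k → MvPolynomial (Fin n) ℂ)
  set x := jetPoly (columnForm γ)
  set q := jetPoly fun s => (MvPolynomial.C (α s) : MvPolynomial (Fin n) ℂ)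
  have hX : Polynomial.X ∣ q := X_dvd_jetPoly _
  have hcoeff (i j : Fin k) :
      MvPolynomial.C (repMat k α i j) = (q ^ (i.val + 1)).coeff (j + 1) := by
    rw [repMat_apply, map_coeff_jetPoly_pow]
  have hcongr : Polynomial.X ^ (k + 1) ∣ jetPoly (columnForm (γ * repMat k α)) - x.comp q := by
    simpa only [← columnForm_mul, ← hcoeff] using X_pow_dvd_jetPoly_sub_comp hX (columnForm γ)
  have hsame : (F.comp (jetPoly (columnForm (γ * repMat k α)))).coeff (j + 1) =
      (F.comp (x.comp q)).coeff (j + 1) := by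
    have hdvd := hcongr.trans (sub_dvd_comp_sub F _ _)
    rw [← sub_eq_zero, ← Polynomial.coeff_sub]
    exact Polynomial.X_pow_dvd_iff.1 hdvd _ (by omega)
  rw [colPoly_eq_coeff_comp, hsame, ← Polynomial.comp_assoc, coeff_succ_comp_of_X_dvd hX]
  simp only [hcoeff, colPoly_eq_coeff_comp, F, x]

theorem phiMat_mul_repMat (γ : Matrix (Fin n) (Fin k) ℂ) (α : Fin k → ℂ) :
    phiMat (γ * repMat k α) = phiMat γ * repMat k α := by
  ext m j
  simp only [phiMat, colPoly_mul_repMat, Matrix.mul_apply, MvPolynomial.coeff_sum,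
    MvPolynomial.coeff_C_mul]
  exact Finset.sum_congr rfl fun _ _ => mul_comm _ _

theorem coeff_colPoly_eq_zero (γ : Matrix (Fin n) (Fin k) ℂ) (j : Fin k) {d : Fin n →₀ ℕ}
    (hd : ¬(0 < ∑ i, d i ∧ ∑ i, d i ≤ k)) : (colPoly γ j).coeff d = 0 := by
  rw [colPoly_eq_sum_coeff, MvPolynomial.coeff_sum]
  refine Finset.sum_eq_zero fun l _ => ?_
  refine (isHomogeneous_coeff_jetPoly_pow (isHomogeneous_columnForm γ) _ _).coeff_eq_zero ?_
  rw [Finsupp.degree_eq_sum]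
  omega

theorem sum_monomial_coeff_eq_self {R : Type*} [CommSemiring R] {P : MvPolynomial (Fin n) R}
    (hP : ∀ d : Fin n →₀ ℕ, ¬(0 < ∑ i, d i ∧ ∑ i, d i ≤ k) → P.coeff d = 0) :
    ∑ m : Mon n k, MvPolynomial.monomial (Finsupp.equivFunOnFinite.symm m.1)
      (P.coeff (Finsupp.equivFunOnFinite.symm m.1)) = P := by
  classical
  ext d
  simp only [MvPolynomial.coeff_sum, MvPolynomial.coeff_monomial]
  by_cases hd : 0 < ∑ i, d i ∧ ∑ i, d i ≤ k
  · refine (Finset.sum_eq_single (⟨d, hd⟩ : Mon n k) (fun m _ hm => if_neg ?_)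
      fun h => absurd (Finset.mem_univ (α := Mon n k) _) h).trans ?_
    · rintro rfl
      exact hm rfl
    · simp
  · rw [hP d hd]
    refine Finset.sum_eq_zero fun m _ => if_neg ?_
    rintro rfl
    exact hd m.2

theorem aeval_colPoly (g : Matrix (Fin n) (Fin n) ℂ) (γ : Matrix (Fin n) (Fin k) ℂ)
    (j : Fin k) : MvPolynomial.aeval (columnForm g) (colPoly γ j) = colPoly (g * γ) j := by
  simp only [colPoly_eq_sum_coeff, map_sum]
  refine Finset.sum_congr rfl fun l _ => ?_
  rw [← funext (aeval_columnForm g γ)]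
  exact map_coeff_jetPoly_pow (MvPolynomial.aeval (columnForm g)).toRingHom (columnForm γ) _ _

theorem symMat_mul_phiMat (g : Matrix (Fin n) (Fin n) ℂ) (γ : Matrix (Fin n) (Fin k) ℂ) :
    Matrix.of (symMat (k := k) g) * phiMat γ = phiMat (g * γ) := by
  ext m j
  have hexpand := congrArg (MvPolynomial.aeval (columnForm g))
    (sum_monomial_coeff_eq_self (k := k) fun _ => coeff_colPoly_eq_zero γ j)
  rw [aeval_colPoly, map_sum] at hexpand
  rw [Matrix.mul_apply, phiMat, ← hexpand, MvPolynomial.coeff_sum]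
  refine Finset.sum_congr rfl fun m' _ => ?_
  rw [MvPolynomial.aeval_monomial, MvPolynomial.algebraMap_eq, MvPolynomial.coeff_C_mul, mul_comm,
    Finsupp.prod_fintype _ _ fun _ => pow_zero _]
  rfl

/-- The monomial `e_i^{l+1}`. -/
def powMon (i : Fin n) (l : Fin k) : Mon n k :=
  ⟨Pi.single i (l.val + 1), by simp, by simp⟩

theorem coeff_aeval_single_X {σ R : Type*} [DecidableEq σ] [CommSemiring R] (z : σ)
    (P : MvPolynomial σ R) (d : ℕ) :
    (MvPolynomial.aeval (Pi.single z (Polynomial.X : Polynomial R)) P).coeff d =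
      P.coeff (Finsupp.single z d) := by
  induction P using MvPolynomial.induction_on' with
  | add P Q hP hQ => rw [map_add, Polynomial.coeff_add, hP, hQ, MvPolynomial.coeff_add]
  | monomial m a =>
    rw [MvPolynomial.aeval_monomial, MvPolynomial.coeff_monomial]
    by_cases hm : ∃ e, m = Finsupp.single z e
    · obtain ⟨e, rfl⟩ := hm
      have hprod : ((Finsupp.single z e).prod
          fun i e => (Pi.single z Polynomial.X : σ → Polynomial R) i ^ e) = Polynomial.X ^ e := by
        simp [Finsupp.prod_single_index]
      rw [hprod, Polynomial.algebraMap_eq, Polynomial.coeff_C_mul_X_pow]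
      exact if_congr (eq_comm.trans (Finsupp.single_injective z).eq_iff.symm) rfl rfl
    · obtain ⟨i, hi⟩ := Finsupp.ne_iff.1 (not_exists.1 hm (m z))
      have hiz : i ≠ z := by
        rintro rfl
        simp at hi
      have hmi : m i ≠ 0 := by simpa [hiz] using hi
      have hprod :
          (m.prod fun i e => (Pi.single z Polynomial.X : σ → Polynomial R) i ^ e) = 0 :=
        Finset.prod_eq_zero (Finsupp.mem_support_iff.2 hmi) (by simp [hiz, hmi])
      rw [hprod, mul_zero, Polynomial.coeff_zero, if_neg]
      exact not_exists.1 hm d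

theorem aeval_single_X_colPoly (γ : Matrix (Fin n) (Fin k) ℂ) (z : Fin n) (j : Fin k) :
    MvPolynomial.aeval (Pi.single z Polynomial.X) (colPoly γ j) =
      jetPoly fun l => repMat k (γ z) l j := by
  have hcolumn (s : Fin k) : MvPolynomial.aeval (Pi.single z Polynomial.X) (columnForm γ s) =
      Polynomial.C (γ z s) * Polynomial.X := by
    simp [columnForm, Pi.single_apply, Polynomial.smul_eq_C_mul]
  rw [colPoly_eq_sum_coeff, map_sum, jetPoly]
  refine Finset.sum_congr rfl fun l _ => ?_
  calc
    _ = (jetPoly (fun s => Polynomial.C (γ z s) * Polynomial.X) ^ (l.val + 1)).coeff (j + 1) := by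
      rw [← funext hcolumn]
      exact map_coeff_jetPoly_pow
        (MvPolynomial.aeval (R := ℂ) (Pi.single z (Polynomial.X : Polynomial ℂ))).toRingHom
        (columnForm γ) _ _
    _ = Polynomial.C (repMat k (γ z) l j) * Polynomial.X ^ (l.val + 1) := by
      rw [jetPoly_mul_const, mul_pow, ← Polynomial.C_pow, Polynomial.coeff_mul_C,
        ← map_coeff_jetPoly_pow, repMat_apply]

theorem phiMat_powMon (γ : Matrix (Fin n) (Fin k) ℂ) (z : Fin n) (l j : Fin k) :
    phiMat γ (powMon z l) j = repMat k (γ z) l j := by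
  have hindex : (Finsupp.equivFunOnFinite.symm (powMon z l).1 : Fin n →₀ ℕ) =
      Finsupp.single z (l.val + 1) := by
    ext i
    simp [powMon, Finsupp.single_apply, eq_comm (a := z)]
  rw [phiMat, hindex, ← coeff_aeval_single_X, aeval_single_X_colPoly, coeff_succ_jetPoly]

theorem phiMat_powMon_zero [NeZero k] (γ : Matrix (Fin n) (Fin k) ℂ) (i : Fin n) (j : Fin k) :
    phiMat γ (powMon i 0) j = γ i j := by
  rw [phiMat_powMon, repMat_zero_apply]

theorem eq_repMat_of_phiMat_eq [NeZero k] {g : Matrix (Fin k) (Fin k) ℂ}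
    (h : phiMat g = phiMat (1 : Matrix (Fin k) (Fin k) ℂ) * g) : g = repMat k (g 0) := by
  ext l j
  calc
    g l j = (repMat k ((1 : Matrix (Fin k) (Fin k) ℂ) 0) * g) l j := by
      rw [repMat_one_zero, one_mul]
    _ = (phiMat (1 : Matrix (Fin k) (Fin k) ℂ) * g) (powMon 0 l) j := by
      simp only [Matrix.mul_apply, phiMat_powMon]
    _ = repMat k (g 0) l j := by rw [← h, phiMat_powMon]

end JetMap

section Wedge

variable {n k : ℕ}

theorem wedge_eq_det_submatrix (A : Matrix (Mon n k) (Fin k) ℂ) (r : Fin k → Mon n k) :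
    wedge (fun j m => A m j) r = (A.submatrix r id).det := by
  rw [← Matrix.det_transpose, Matrix.det_apply']
  rfl

theorem wedgePhi_apply (γ : Matrix (Fin n) (Fin k) ℂ) (r : Fin k → Mon n k) :
    wedgePhi γ r = ((phiMat γ).submatrix r id).det :=
  wedge_eq_det_submatrix _ _

theorem actV_wedge (g : Matrix (Fin n) (Fin n) ℂ) (A : Matrix (Mon n k) (Fin k) ℂ) :
    actV g (wedge fun j m => A m j) = wedge fun j m => (Matrix.of (symMat (k := k) g) * A) m j := by
  ext r
  simp only [actV, wedge, Matrix.mul_apply, Matrix.of_apply, Fintype.prod_sum, Finset.mul_sum,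
    Finset.prod_mul_distrib]
  rw [Finset.sum_comm]
  exact Finset.sum_congr rfl fun _ _ => Finset.sum_congr rfl fun _ _ => mul_left_comm _ _ _

theorem actV_wedgePhi (g : Matrix (Fin n) (Fin n) ℂ) (γ : Matrix (Fin n) (Fin k) ℂ) :
    actV g (wedgePhi γ) = wedgePhi (g * γ) := by
  rw [wedgePhi, actV_wedge, symMat_mul_phiMat, wedgePhi]

theorem actV_pkVec (g : Matrix (Fin k) (Fin k) ℂ) : actV g (pkVec k) = wedgePhi g := by
  rw [pkVec, actV_wedgePhi, mul_one]

theorem wedgePhi_mul_repMat (γ : Matrix (Fin n) (Fin k) ℂ) (α : Fin k → ℂ) :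
    wedgePhi (γ * repMat k α) = (repMat k α).det • wedgePhi γ := by
  ext r
  rw [Pi.smul_apply, smul_eq_mul, wedgePhi_apply, wedgePhi_apply, phiMat_mul_repMat,
    Matrix.submatrix_mul _ _ r id id Function.bijective_id, Matrix.det_mul, mul_comm,
    Matrix.submatrix_id_id]

theorem mul_adjugate_submatrix_apply {ι m R : Type*} [Fintype m] [DecidableEq m] [CommRing R]
    (A : Matrix ι m R) (r : m → ι) (a : ι) (i : m) :
    (A * (A.submatrix r id).adjugate) a i = (A.submatrix (Function.update r i a) id).det := by
  have hrow : A.submatrix (Function.update r i a) id = (A.submatrix r id).updateRow i (A a) := by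
    ext b c
    rcases eq_or_ne b i with rfl | hb
    · simp
    · simp [hb]
  rw [hrow, ← Matrix.cramer_transpose_apply, Matrix.cramer_eq_adjugate_mulVec,
    ← Matrix.adjugate_transpose, Matrix.mulVec_transpose]
  rfl

variable [NeZero k]

theorem submatrix_phiMat_powMon_zero (γ : Matrix (Fin n) (Fin k) ℂ) :
    (phiMat γ).submatrix (fun i => powMon i 0) id = γ := by
  ext i j
  exact phiMat_powMon_zero γ i j

theorem wedgePhi_powMon_zero (γ : Matrix (Fin k) (Fin k) ℂ) :
    wedgePhi γ (fun i => powMon i 0) = γ.det := by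
  rw [wedgePhi_apply, submatrix_phiMat_powMon_zero]

theorem phiMat_mul_adjugate_apply (γ : Matrix (Fin k) (Fin k) ℂ) (m : Mon k k) (i : Fin k) :
    (phiMat γ * γ.adjugate) m i =
      wedgePhi γ (Function.update (fun i => powMon i 0) i m) := by
  rw [wedgePhi_apply, ← mul_adjugate_submatrix_apply, submatrix_phiMat_powMon_zero]

theorem phiMat_eq_of_wedgePhi_eq {g : Matrix (Fin k) (Fin k) ℂ} (hdet : g.det ≠ 0)
    (h : wedgePhi g = g.det • pkVec k) : phiMat g = phiMat (1 : Matrix (Fin k) (Fin k) ℂ) * g := by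
  have hadj : phiMat g * g.adjugate = g.det • phiMat 1 := by
    ext m i
    rw [phiMat_mul_adjugate_apply, h, Pi.smul_apply, pkVec, ← phiMat_mul_adjugate_apply,
      Matrix.adjugate_one, Matrix.mul_one, Matrix.smul_apply]
  refine smul_right_injective _ hdet (?_ : g.det • phiMat g = g.det • _)
  calc
    g.det • phiMat g = phiMat g * g.adjugate * g := by
      rw [Matrix.mul_assoc, Matrix.adjugate_mul, Matrix.mul_smul, Matrix.mul_one]
    _ = g.det • (phiMat (1 : Matrix (Fin k) (Fin k) ℂ) * g) := by rw [hadj, Matrix.smul_mul]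

end Wedge

section Stabiliser

variable {k K : ℕ}

theorem actW_mul_prod (g : Matrix (Fin k) (Fin k) ℂ) (T : (Fin k → Mon k k) → ℂ)
    (v : Fin k → ℂ) (x : (Fin k → Mon k k) × (Fin K → Fin k)) :
    actW g (fun y => T y.1 * ∏ j, v (y.2 j)) x = actV g T x.1 * ∏ j, g.mulVec v (x.2 j) := by
  simp only [actW, actV, Matrix.mulVec, dotProduct, Fintype.prod_sum, Finset.sum_mul_sum,
    Fintype.sum_prod_type, Finset.prod_mul_distrib]
  exact Finset.sum_congr rfl fun _ _ => Finset.sum_congr rfl fun _ _ => by ring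

theorem actW_ptW_apply (g : Matrix (Fin k) (Fin k) ℂ)
    (x : (Fin k → Mon k k) × (Fin K → Fin k)) :
    actW g (ptW k K) x = wedgePhi g x.1 * ∏ j, g.mulVec (e1 k) (x.2 j) := by
  rw [← actV_pkVec]
  exact actW_mul_prod g (pkVec k) (e1 k) x

variable [NeZero k]

theorem actW_repMat_ptW (α : Fin k → ℂ) :
    actW (repMat k α) (ptW k K) = α 0 ^ (∑ i ∈ Finset.range k, (i + 1) + K) • ptW k K := by
  ext x
  have hwedge : wedgePhi (repMat k α) = (repMat k α).det • pkVec k := by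
    rw [pkVec, ← wedgePhi_mul_repMat, one_mul]
  rw [actW_ptW_apply, hwedge, det_repMat, repMat_mulVec_e1, pow_add]
  simp only [ptW, Pi.smul_apply, smul_eq_mul, Finset.prod_mul_distrib, Finset.prod_const,
    Finset.card_univ, Fintype.card_fin]
  ring

theorem wedgePhi_mul_pow_of_actW_ptW_eq {g : Matrix (Fin k) (Fin k) ℂ}
    (h : actW g (ptW k K) = ptW k K) (r : Fin k → Mon k k) :
    wedgePhi g r * g 0 0 ^ K = pkVec k r := by
  have hr := congrFun h (r, fun _ => 0)
  rw [actW_ptW_apply] at hr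
  simpa [ptW, e1_eq_single] using hr

theorem eq_repMat_of_actW_ptW_eq {g : Matrix (Fin k) (Fin k) ℂ}
    (h : actW g (ptW k K) = ptW k K) : g = repMat k (g 0) := by
  have hdet : g.det * g 0 0 ^ K = 1 := by
    simpa only [pkVec, wedgePhi_powMon_zero, Matrix.det_one] using
      wedgePhi_mul_pow_of_actW_ptW_eq h fun i => powMon i 0
  have hwedge : wedgePhi g = g.det • pkVec k := by
    ext r
    rw [Pi.smul_apply, smul_eq_mul, ← wedgePhi_mul_pow_of_actW_ptW_eq h r, mul_left_comm, hdet,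
      mul_one]
  exact eq_repMat_of_phiMat_eq (phiMat_eq_of_wedgePhi_eq (left_ne_zero_of_mul_eq_one hdet) hwedge)

theorem ptW_ne_zero : ptW k K ≠ 0 := by
  intro h
  have := congrFun h (fun i => powMon i 0, fun _ => 0)
  simp [ptW, pkVec, wedgePhi_powMon_zero, e1_eq_single] at this

theorem actW_ptW_eq_iff {g : Matrix (Fin k) (Fin k) ℂ} :
    actW g (ptW k K) = ptW k K ↔
      ∃ α : Fin k → ℂ, α 0 ^ (∑ i ∈ Finset.range k, (i + 1) + K) = 1 ∧ g = repMat k α := by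
  have hrep (α : Fin k → ℂ) : actW (repMat k α) (ptW k K) = ptW k K ↔
      α 0 ^ (∑ i ∈ Finset.range k, (i + 1) + K) = 1 := by
    simpa only [actW_repMat_ptW, one_smul] using
      smul_left_inj (r₂ := (1 : ℂ)) (ptW_ne_zero (k := k) (K := K))
  constructor
  · intro h
    have hg := eq_repMat_of_actW_ptW_eq h
    rw [hg] at h
    exact ⟨g 0, (hrep _).1 h, hg⟩
  · rintro ⟨α, hα, rfl⟩
    exact (hrep α).2 hα

end Stabiliser

theorem stabiliser_eq_Uk_general (k : ℕ) [NeZero k] (K : ℕ)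
    (hK : K.Coprime (∑ i ∈ Finset.range k, (i + 1)))
    (g : Matrix (Fin k) (Fin k) ℂ) (hg : g.det = 1) :
    actW g (ptW k K) = ptW k K ↔ g ∈ Uset k := by
  rw [actW_ptW_eq_iff, mem_Uset_iff]
  refine exists_congr fun α => and_congr_left ?_
  rintro rfl
  rw [det_repMat] at hg
  rw [pow_add, hg, one_mul]
  refine ⟨fun hα => ?_, fun hα => by rw [hα, one_pow]⟩
  exact (pow_eq_one_iff_of_coprime hK).1 ⟨hα, hg⟩

/-- For `K = M·(1+2+⋯+k) + 1`, the stabiliser of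
`p_k ⊗ e₁^{⊗K}` in `SL(k,ℂ)` is exactly `𝕌_k`. -/
theorem stabiliser_eq_Uk (k : ℕ) (hk : 1 ≤ k) (M K : ℕ)
    (hK : K = M * (∑ i ∈ Finset.range k, (i + 1)) + 1)
    (g : Matrix (Fin k) (Fin k) ℂ) (hg : g.det = 1) :
    actW g (ptW k K) = ptW k K ↔ g ∈ Uset k := by
  have : NeZero k := NeZero.of_pos hk
  exact stabiliser_eq_Uk_general k K (by simp [hK]) g hg

end JetPaper
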